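/- (Isoperimetric inequality on the cube) Let A ⊂ [0,1]ⁿ be measurable with volume vol[A], let p > 0, p* = min(p,2), and α satisfy Φ(α) = vol[A]. Then the ℓ_p ε-expansion of A within the cube satisfies vol[A(ε, d_p)] ≥ Φ(α + √(2πn)·ε/n^{1/p*}). -/

import Mathlib

open Real MeasureTheory

/-- The standard normal CDF. -/
noncomputable def stdNormalCDF (z : ℝ) : ℝ :=
  (Real.sqrt (2 * Real.pi))⁻¹ * ∫ t in Set.Iic z, Real.exp (-t ^ 2 / 2)

/-- The ℓ_p distance on ℝⁿ (for p > 0). -/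
noncomputable def lpDist {n : ℕ} (p : ℝ) (x y : Fin n → ℝ) : ℝ :=
  (∑ i, |x i - y i| ^ p) ^ (1 / p)

/-!
The coordinatewise map `Φ` carries the standard Gaussian measure on `ℝⁿ` to the uniform measure on
the cube and is `(2π)^(-1/2)`-Lipschitz, so it suffices to compare the `ℓ_p` and Euclidean distances
and to prove the Gaussian isoperimetric inequality `Φ⁻¹ (γ (A_r)) ≥ Φ⁻¹ (γ A) + r`.

The latter is derived from Bobkov's functional inequality `I (∫ f dγ) ≤ ∫ √(I(f)² + ‖∇f‖²) dγ`
for the profile `I = φ ∘ Φ⁻¹`, which rests on the identity `I I'' = -1`. The two-point version is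
proved by Taylor comparison for `I²`; it tensorizes over independent signs by Minkowski's integral
inequality and passes to the Gaussian measure by the central limit theorem. Applied to
`Φ (k (s - d x))`, with `d` a smoothed distance to `A`, Bobkov's inequality bounds from below the
derivative in `s` of `Φ⁻¹ (∫ Φ (k (s - d x)) dγ)` by `k / √(1 + k²)`, which tends to `1` as
`k → ∞`.
-/

open Filter Topology ProbabilityTheory
open scoped ENNReal NNReal

section

local notation "Φ" => stdNormalCDF
local notation "φ" => gaussianPDFReal 0 1

theorem hasDerivAt_gaussianPDFReal (m : ℝ) (v : ℝ≥0) (x : ℝ) :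
    HasDerivAt (gaussianPDFReal m v) (-((x - m) / v) * gaussianPDFReal m v x) x := by
  have hexponent : HasDerivAt (fun x => -(x - m) ^ 2 / (2 * v)) (-((x - m) / v)) x := by
    refine ((((hasDerivAt_id x).sub_const m).pow 2).neg.div_const _).congr_deriv ?_
    simp only [id, Nat.cast_ofNat, Nat.add_one_sub_one, pow_one, mul_one, neg_div]
    rw [mul_div_mul_left _ _ two_ne_zero]
  refine (hexponent.exp.const_mul (√(2 * π * v))⁻¹).congr_deriv ?_
  rw [gaussianPDFReal]
  ring

theorem continuous_gaussianPDFReal (m : ℝ) (v : ℝ≥0) : Continuous (gaussianPDFReal m v) :=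
  continuous_iff_continuousAt.2 fun x => (hasDerivAt_gaussianPDFReal m v x).continuousAt

theorem gaussianPDFReal_le_of_abs_sub_le {m x y : ℝ} (v : ℝ≥0) (h : |x - m| ≤ |y - m|) :
    gaussianPDFReal m v y ≤ gaussianPDFReal m v x := by
  have := sq_le_sq.2 h
  unfold gaussianPDFReal
  gcongr

theorem gaussianPDFReal_le_apply_mean (m : ℝ) (v : ℝ≥0) (x : ℝ) :
    gaussianPDFReal m v x ≤ gaussianPDFReal m v m :=
  gaussianPDFReal_le_of_abs_sub_le v (by simp)

theorem tendsto_gaussianPDFReal_zero_one_cocompact : Tendsto φ (cocompact ℝ) (𝓝 0) := by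
  have hexp := (tendsto_rpow_abs_mul_exp_neg_mul_sq_cocompact (a := 1 / 2)
    (by norm_num) 0).const_mul (√(2 * π))⁻¹
  rw [mul_zero] at hexp
  refine hexp.congr fun x => ?_
  rw [rpow_zero, one_mul, gaussianPDFReal]
  congr 2
  · simp
  · push_cast
    ring

theorem gaussianPDFReal_zero_one_pos (t : ℝ) : 0 < φ t := gaussianPDFReal_pos 0 1 t one_ne_zero

theorem gaussianPDFReal_zero_one_zero : φ 0 = (√(2 * π))⁻¹ := by simp [gaussianPDFReal]

theorem gaussianPDFReal_zero_one_neg (t : ℝ) : φ (-t) = φ t := by simp [gaussianPDFReal]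

theorem gaussianPDFReal_zero_one_le (t : ℝ) : φ t ≤ φ 0 := gaussianPDFReal_le_apply_mean 0 1 t

theorem stdNormalCDF_eq_integral (z : ℝ) : Φ z = ∫ t in Set.Iic z, φ t := by
  simp [stdNormalCDF, gaussianPDFReal, integral_const_mul]

theorem stdNormalCDF_eq_cdf : Φ = cdf (gaussianReal 0 1) := by
  funext z
  rw [stdNormalCDF_eq_integral, cdf_eq_real, measureReal_def,
    gaussianReal_apply_eq_integral 0 one_ne_zero,
    ENNReal.toReal_ofReal (integral_nonneg (gaussianPDFReal_nonneg 0 1))]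

theorem hasStrictDerivAt_stdNormalCDF (z : ℝ) : HasStrictDerivAt Φ (φ z) z := by
  have hφ : Integrable φ := integrable_gaussianPDFReal 0 1
  have hcdf : Φ = fun z => Φ 0 + ∫ t in (0 : ℝ)..z, φ t := by
    funext z
    rw [stdNormalCDF_eq_integral, stdNormalCDF_eq_integral,
      ← intervalIntegral.integral_Iic_sub_Iic hφ.integrableOn hφ.integrableOn, add_sub_cancel]
  have hcont := continuous_gaussianPDFReal 0 1
  rw [hcdf]
  exact (intervalIntegral.integral_hasStrictDerivAt_right hφ.intervalIntegrable
    (hcont.stronglyMeasurableAtFilter _ _) hcont.continuousAt).const_add _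

theorem hasDerivAt_stdNormalCDF (z : ℝ) : HasDerivAt Φ (φ z) z :=
  (hasStrictDerivAt_stdNormalCDF z).hasDerivAt

theorem continuous_stdNormalCDF : Continuous Φ :=
  continuous_iff_continuousAt.2 fun z => (hasDerivAt_stdNormalCDF z).continuousAt

theorem strictMono_stdNormalCDF : StrictMono Φ :=
  strictMono_of_hasDerivAt_pos hasDerivAt_stdNormalCDF gaussianPDFReal_zero_one_pos

theorem tendsto_stdNormalCDF_atTop : Tendsto Φ atTop (𝓝 1) :=
  stdNormalCDF_eq_cdf ▸ tendsto_cdf_atTop _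

theorem tendsto_stdNormalCDF_atBot : Tendsto Φ atBot (𝓝 0) :=
  stdNormalCDF_eq_cdf ▸ tendsto_cdf_atBot _

theorem stdNormalCDF_mem_Ioo (z : ℝ) : Φ z ∈ Set.Ioo 0 1 := by
  constructor
  · calc 0 ≤ Φ (z - 1) := by rw [stdNormalCDF_eq_cdf]; exact cdf_nonneg _ _
      _ < Φ z := strictMono_stdNormalCDF (sub_one_lt z)
  · calc Φ z < Φ (z + 1) := strictMono_stdNormalCDF (lt_add_one z)
      _ ≤ 1 := by rw [stdNormalCDF_eq_cdf]; exact cdf_le_one _ _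

theorem stdNormalCDF_pos (z : ℝ) : 0 < Φ z := (stdNormalCDF_mem_Ioo z).1

theorem stdNormalCDF_lt_one (z : ℝ) : Φ z < 1 := (stdNormalCDF_mem_Ioo z).2

theorem range_stdNormalCDF : Set.range Φ = Set.Ioo 0 1 := by
  refine Set.Subset.antisymm (Set.range_subset_iff.2 stdNormalCDF_mem_Ioo) fun y hy => ?_
  obtain ⟨a, ha⟩ := (tendsto_stdNormalCDF_atBot.eventually (gt_mem_nhds hy.1)).exists
  obtain ⟨b, hb⟩ := (tendsto_stdNormalCDF_atTop.eventually (lt_mem_nhds hy.2)).exists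
  exact mem_range_of_exists_le_of_exists_ge continuous_stdNormalCDF ⟨a, ha.le⟩ ⟨b, hb.le⟩

theorem stdNormalCDF_neg (t : ℝ) : Φ (-t) = 1 - Φ t := by
  have hφ : Integrable φ := integrable_gaussianPDFReal 0 1
  have hreflect : Φ (-t) = ∫ x in Set.Ioi t, φ x := by
    rw [stdNormalCDF_eq_integral, ← neg_neg t, ← integral_comp_neg_Iic, neg_neg]
    simp_rw [gaussianPDFReal_zero_one_neg]
  rw [hreflect, eq_sub_iff_add_eq', stdNormalCDF_eq_integral,
    intervalIntegral.integral_Iic_add_Ioi hφ.integrableOn hφ.integrableOn,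
    integral_gaussianPDFReal_eq_one 0 one_ne_zero]

theorem lipschitzWith_stdNormalCDF : LipschitzWith (NNReal.sqrt (2 * NNReal.pi))⁻¹ Φ := by
  refine lipschitzWith_of_nnnorm_deriv_le
    (fun z => (hasDerivAt_stdNormalCDF z).differentiableAt) fun z => ?_
  rw [(hasDerivAt_stdNormalCDF z).deriv, ← NNReal.coe_le_coe, coe_nnnorm,
    norm_of_nonneg (gaussianPDFReal_zero_one_pos z).le]
  refine (gaussianPDFReal_zero_one_le z).trans_eq ?_
  rw [gaussianPDFReal_zero_one_zero]
  simp

/-- The standard normal quantile function, the inverse of `stdNormalCDF` on `(0, 1)`; its values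
outside `(0, 1)` are junk. -/
noncomputable def probit : ℝ → ℝ := Function.invFun Φ

theorem probit_stdNormalCDF (t : ℝ) : probit (Φ t) = t :=
  Function.leftInverse_invFun strictMono_stdNormalCDF.injective t

theorem stdNormalCDF_probit {y : ℝ} (hy : y ∈ Set.Ioo 0 1) : Φ (probit y) = y :=
  Function.invFun_eq (range_stdNormalCDF.ge hy)

/-- The Gaussian isoperimetric profile `φ ∘ Φ⁻¹`: the Gaussian perimeter of a half-space of Gaussian
measure `y`. -/
noncomputable def gaussianProfile (y : ℝ) : ℝ := φ (probit y)

local notation "I" => gaussianProfile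

theorem gaussianProfile_pos (y : ℝ) : 0 < I y := gaussianPDFReal_zero_one_pos _

theorem gaussianProfile_le (y : ℝ) : I y ≤ φ 0 := gaussianPDFReal_zero_one_le _

theorem gaussianProfile_stdNormalCDF (t : ℝ) : I (Φ t) = φ t := by
  rw [gaussianProfile, probit_stdNormalCDF]

theorem hasDerivAt_probit {y : ℝ} (hy : y ∈ Set.Ioo 0 1) : HasDerivAt probit (I y)⁻¹ y := by
  have h := (hasStrictDerivAt_stdNormalCDF (probit y)).to_local_left_inverse
    (gaussianProfile_pos y).ne' (Eventually.of_forall probit_stdNormalCDF)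
  rw [stdNormalCDF_probit hy] at h
  exact h.hasDerivAt

theorem hasDerivAt_gaussianProfile {y : ℝ} (hy : y ∈ Set.Ioo 0 1) :
    HasDerivAt I (-probit y) y := by
  refine ((hasDerivAt_gaussianPDFReal 0 1 (probit y)).comp y (hasDerivAt_probit hy)).congr_deriv ?_
  change -((probit y - 0) / (1 : ℝ≥0)) * I y * (I y)⁻¹ = -probit y
  rw [mul_inv_cancel_right₀ (gaussianProfile_pos y).ne', sub_zero, NNReal.coe_one, div_one]

theorem strictMonoOn_probit : StrictMonoOn probit (Set.Ioo 0 1) := fun x hx y hy hxy => by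
  rwa [← strictMono_stdNormalCDF.lt_iff_lt, stdNormalCDF_probit hx, stdNormalCDF_probit hy]

theorem probit_one_sub {y : ℝ} (hy : y ∈ Set.Ioo 0 1) : probit (1 - y) = -probit y := by
  rw [← probit_stdNormalCDF (-probit y), stdNormalCDF_neg, stdNormalCDF_probit hy]

theorem gaussianProfile_one_sub {y : ℝ} (hy : y ∈ Set.Ioo 0 1) : I (1 - y) = I y := by
  rw [gaussianProfile, probit_one_sub hy, gaussianPDFReal_zero_one_neg, gaussianProfile]

theorem apply_zero_le_of_second_deriv_nonneg {f f' f'' : ℝ → ℝ} {x : ℝ} (hx : 0 ≤ x)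
    (hf : ∀ t ∈ Set.Icc 0 x, HasDerivAt f (f' t) t)
    (hf' : ∀ t ∈ Set.Icc 0 x, HasDerivAt f' (f'' t) t) (hf'0 : 0 ≤ f' 0)
    (hf'' : ∀ t ∈ Set.Icc 0 x, 0 ≤ f'' t) : f 0 ≤ f x := by
  have hzero : (0 : ℝ) ∈ Set.Icc 0 x := Set.left_mem_Icc.2 hx
  have hf'mono : MonotoneOn f' (Set.Icc 0 x) :=
    monotoneOn_of_hasDerivWithinAt_nonneg (convex_Icc 0 x)
      (fun t ht => (hf' t ht).continuousAt.continuousWithinAt)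
      (fun t ht => (hf' t (interior_subset ht)).hasDerivWithinAt)
      fun t ht => hf'' t (interior_subset ht)
  have hfmono : MonotoneOn f (Set.Icc 0 x) :=
    monotoneOn_of_hasDerivWithinAt_nonneg (convex_Icc 0 x)
      (fun t ht => (hf t ht).continuousAt.continuousWithinAt)
      (fun t ht => (hf t (interior_subset ht)).hasDerivWithinAt)
      fun t ht => hf'0.trans (hf'mono hzero (interior_subset ht) (interior_subset ht).1)
  exact hfmono hzero (Set.right_mem_Icc.2 hx) hx

section SymmetricDifferences

variable {f f' f'' : ℝ → ℝ} {c x : ℝ}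

theorem sub_mem_Icc_and_add_mem_Icc {t : ℝ} (ht : t ∈ Set.Icc 0 x) :
    c - t ∈ Set.Icc (c - x) (c + x) ∧ c + t ∈ Set.Icc (c - x) (c + x) :=
  ⟨⟨by linarith [ht.2], by linarith [ht.1, ht.2]⟩, ⟨by linarith [ht.1, ht.2], by linarith [ht.2]⟩⟩

theorem two_mul_add_le_apply_sub_add_apply_add {K : ℝ} (hx : 0 ≤ x)
    (hf : ∀ y ∈ Set.Icc (c - x) (c + x), HasDerivAt f (f' y) y)
    (hf' : ∀ y ∈ Set.Icc (c - x) (c + x), HasDerivAt f' (f'' y) y)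
    (hf'' : ∀ t ∈ Set.Icc 0 x, K ≤ f'' (c - t) + f'' (c + t)) :
    2 * f c + K * x ^ 2 / 2 ≤ f (c - x) + f (c + x) := by
  have key := apply_zero_le_of_second_deriv_nonneg hx
    (f := fun t => f (c - t) + f (c + t) - K * (t ^ 2 / 2))
    (f' := fun t => -f' (c - t) + f' (c + t) - K * t)
    (f'' := fun t => f'' (c - t) + f'' (c + t) - K)
    (fun t ht => by
      obtain ⟨hsub, hadd⟩ := sub_mem_Icc_and_add_mem_Icc (c := c) ht
      refine (((hf _ hsub).comp_const_sub c t).add ((hf _ hadd).comp_const_add c t)).sub ?_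
      exact (((hasDerivAt_pow 2 t).div_const 2).const_mul K).congr_deriv (by simp))
    (fun t ht => by
      obtain ⟨hsub, hadd⟩ := sub_mem_Icc_and_add_mem_Icc (c := c) ht
      refine (((((hf' _ hsub).comp_const_sub c t).neg).add
        ((hf' _ hadd).comp_const_add c t)).sub ((hasDerivAt_id t).const_mul K)).congr_deriv ?_
      simp)
    (by simp) (fun t ht => sub_nonneg.2 (hf'' t ht))
  simp only [sub_zero, add_zero] at key
  linarith

theorem apply_add_sub_apply_sub_le (hx : 0 ≤ x)
    (hf : ∀ y ∈ Set.Icc (c - x) (c + x), HasDerivAt f (f' y) y)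
    (hf' : ∀ y ∈ Set.Icc (c - x) (c + x), HasDerivAt f' (f'' y) y)
    (hf'' : ∀ t ∈ Set.Icc 0 x, f'' (c + t) ≤ f'' (c - t)) :
    f (c + x) - f (c - x) ≤ 2 * f' c * x := by
  have key := apply_zero_le_of_second_deriv_nonneg hx
    (f := fun t => f (c - t) - f (c + t) + 2 * f' c * t)
    (f' := fun t => -f' (c - t) - f' (c + t) + 2 * f' c)
    (f'' := fun t => f'' (c - t) - f'' (c + t))
    (fun t ht => by
      obtain ⟨hsub, hadd⟩ := sub_mem_Icc_and_add_mem_Icc (c := c) ht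
      refine ((((hf _ hsub).comp_const_sub c t).sub ((hf _ hadd).comp_const_add c t)).add
        ((hasDerivAt_id t).const_mul (2 * f' c))).congr_deriv ?_
      simp)
    (fun t ht => by
      obtain ⟨hsub, hadd⟩ := sub_mem_Icc_and_add_mem_Icc (c := c) ht
      refine (((((hf' _ hsub).comp_const_sub c t).neg).sub
        ((hf' _ hadd).comp_const_add c t)).add_const (2 * f' c)).congr_deriv ?_
      simp)
    (by simp only [sub_zero, add_zero]; linarith) (fun t ht => sub_nonneg.2 (hf'' t ht))
  simp only [sub_zero, add_zero, mul_zero, sub_self] at key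
  linarith

end SymmetricDifferences

section TwoPoint

theorem hasDerivAt_gaussianProfile_sq {y : ℝ} (hy : y ∈ Set.Ioo 0 1) :
    HasDerivAt (fun y => I y ^ 2) (-2 * (I y * probit y)) y := by
  refine ((hasDerivAt_gaussianProfile hy).pow 2).congr_deriv ?_
  push_cast
  ring

theorem hasDerivAt_gaussianProfile_mul_probit {y : ℝ} (hy : y ∈ Set.Ioo 0 1) :
    HasDerivAt (fun y => I y * probit y) (1 - probit y ^ 2) y := by
  refine ((hasDerivAt_gaussianProfile hy).mul (hasDerivAt_probit hy)).congr_deriv ?_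
  rw [mul_inv_cancel₀ (gaussianProfile_pos y).ne']
  ring

theorem hasDerivAt_probit_sq {y : ℝ} (hy : y ∈ Set.Ioo 0 1) :
    HasDerivAt (fun y => probit y ^ 2) (2 * (probit y / I y)) y := by
  refine ((hasDerivAt_probit hy).pow 2).congr_deriv ?_
  push_cast
  ring

theorem hasDerivAt_probit_div_gaussianProfile {y : ℝ} (hy : y ∈ Set.Ioo 0 1) :
    HasDerivAt (fun y => probit y / I y) ((1 + probit y ^ 2) / I y ^ 2) y := by
  have hI := (gaussianProfile_pos y).ne'
  refine ((hasDerivAt_probit hy).div (hasDerivAt_gaussianProfile hy) hI).congr_deriv ?_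
  rw [inv_mul_cancel₀ hI]
  ring

variable {c x : ℝ}

theorem two_mul_probit_sq_le (hx : 0 ≤ x) (hc : Set.Icc (c - x) (c + x) ⊆ Set.Ioo 0 1) :
    2 * probit c ^ 2 ≤ probit (c - x) ^ 2 + probit (c + x) ^ 2 := by
  have h := two_mul_add_le_apply_sub_add_apply_add (K := 0) hx
    (fun y hy => hasDerivAt_probit_sq (hc hy))
    (fun y hy => (hasDerivAt_probit_div_gaussianProfile (hc hy)).const_mul 2)
    (fun t _ => by positivity)
  simpa using h

theorem gaussianProfile_sq_second_difference_ge (hx : 0 ≤ x)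
    (hc : Set.Icc (c - x) (c + x) ⊆ Set.Ioo 0 1) :
    2 * I c ^ 2 + 2 * (probit c ^ 2 - 1) * x ^ 2 ≤ I (c - x) ^ 2 + I (c + x) ^ 2 := by
  have h := two_mul_add_le_apply_sub_add_apply_add (K := 4 * (probit c ^ 2 - 1)) hx
    (fun y hy => hasDerivAt_gaussianProfile_sq (hc hy))
    (fun y hy => (hasDerivAt_gaussianProfile_mul_probit (hc hy)).const_mul (-2))
    (fun t ht => by
      obtain ⟨hsub, hadd⟩ := sub_mem_Icc_and_add_mem_Icc (c := c) ht
      linarith [two_mul_probit_sq_le ht.1 ((Set.Icc_subset_Icc hsub.1 hadd.2).trans hc)])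
  linarith

theorem abs_probit_add_le_abs_probit_sub (hx : 0 ≤ x)
    (hc : Set.Icc (c - x) (c + x) ⊆ Set.Ioo 0 1) (hc_half : c ≤ 1 / 2) :
    |probit (c + x)| ≤ |probit (c - x)| := by
  obtain ⟨hsub, hadd⟩ := sub_mem_Icc_and_add_mem_Icc (c := c) (Set.right_mem_Icc.2 hx)
  have hle : probit (c - x) ≤ probit (c + x) :=
    strictMonoOn_probit.monotoneOn (hc hsub) (hc hadd) (by linarith)
  have hle_neg : probit (c + x) ≤ -probit (c - x) := by
    rw [← probit_one_sub (hc hsub)]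
    exact strictMonoOn_probit.monotoneOn (hc hadd) (Set.Ioo.one_sub_mem (hc hsub)) (by linarith)
  rw [abs_of_nonpos (by linarith : probit (c - x) ≤ 0)]
  exact abs_le.2 ⟨by linarith, hle_neg⟩

theorem sq_gaussianProfile_sq_first_difference_le_of_le_half (hx : 0 ≤ x)
    (hc : Set.Icc (c - x) (c + x) ⊆ Set.Ioo 0 1) (hc_half : c ≤ 1 / 2) :
    (I (c + x) ^ 2 - I (c - x) ^ 2) ^ 2 ≤ 16 * (I c * probit c * x) ^ 2 := by
  have hupper := apply_add_sub_apply_sub_le hx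
    (fun y hy => hasDerivAt_gaussianProfile_sq (hc hy))
    (fun y hy => (hasDerivAt_gaussianProfile_mul_probit (hc hy)).const_mul (-2))
    (fun t ht => by
      obtain ⟨hsub, hadd⟩ := sub_mem_Icc_and_add_mem_Icc (c := c) ht
      linarith [sq_le_sq.2 (abs_probit_add_le_abs_probit_sub ht.1
        ((Set.Icc_subset_Icc hsub.1 hadd.2).trans hc) hc_half)])
  have hlower : I (c - x) ^ 2 ≤ I (c + x) ^ 2 := by
    refine pow_le_pow_left₀ (gaussianProfile_pos (c - x)).le ?_ 2
    refine gaussianPDFReal_le_of_abs_sub_le 1 ?_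
    simpa only [sub_zero] using abs_probit_add_le_abs_probit_sub hx hc hc_half
  calc (I (c + x) ^ 2 - I (c - x) ^ 2) ^ 2 ≤ (2 * (-2 * (I c * probit c)) * x) ^ 2 :=
        pow_le_pow_left₀ (sub_nonneg.2 hlower) hupper 2
    _ = _ := by ring

theorem sq_gaussianProfile_sq_first_difference_le (hx : 0 ≤ x)
    (hc : Set.Icc (c - x) (c + x) ⊆ Set.Ioo 0 1) :
    (I (c + x) ^ 2 - I (c - x) ^ 2) ^ 2 ≤ 16 * (I c * probit c * x) ^ 2 := by
  obtain hc_half | hc_half := le_total c (1 / 2)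
  · exact sq_gaussianProfile_sq_first_difference_le_of_le_half hx hc hc_half
  · obtain ⟨hsub, hadd⟩ := sub_mem_Icc_and_add_mem_Icc (c := c) (Set.right_mem_Icc.2 hx)
    have hmid : c ∈ Set.Ioo 0 1 := hc ⟨by linarith, by linarith⟩
    have hreflect : Set.Icc (1 - c - x) (1 - c + x) ⊆ Set.Ioo 0 1 := fun y hy =>
      Set.Ioo.mem_iff_one_sub_mem.2 (hc ⟨by linarith [hy.2], by linarith [hy.1]⟩)
    have h := sq_gaussianProfile_sq_first_difference_le_of_le_half hx hreflect (by linarith)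
    rw [sub_add, sub_sub] at h
    rwa [gaussianProfile_one_sub hmid, probit_one_sub hmid, gaussianProfile_one_sub (hc hsub),
      gaussianProfile_one_sub (hc hadd), mul_neg, neg_mul, neg_sq, sub_sq_comm] at h

theorem two_mul_le_add_of_sq_sub_sq_le {J P S : ℝ} (hJ : 0 < J) (hP : 0 ≤ P) (hS : 0 ≤ S)
    (h : (P ^ 2 - S ^ 2) ^ 2 ≤ 8 * J ^ 2 * (P ^ 2 + S ^ 2 - 2 * J ^ 2)) : 2 * J ≤ P + S := by
  by_contra! hlt
  have hsum : 0 < 4 * J ^ 2 - (P + S) ^ 2 := by nlinarith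
  have hprod : 0 ≤ (4 * J ^ 2 - (P + S) ^ 2) * ((P - S) ^ 2 - 4 * J ^ 2) := by nlinarith
  have hdiff := nonneg_of_mul_nonneg_right hprod hsum
  nlinarith [mul_nonneg hP hS]

theorem two_mul_gaussianProfile_le (hx : 0 ≤ x) (hc : Set.Icc (c - x) (c + x) ⊆ Set.Ioo 0 1) :
    2 * I c ≤ √(I (c + x) ^ 2 + x ^ 2) + √(I (c - x) ^ 2 + x ^ 2) := by
  refine two_mul_le_add_of_sq_sub_sq_le (gaussianProfile_pos c) (sqrt_nonneg _) (sqrt_nonneg _) ?_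
  rw [sq_sqrt (by positivity), sq_sqrt (by positivity)]
  calc (I (c + x) ^ 2 + x ^ 2 - (I (c - x) ^ 2 + x ^ 2)) ^ 2
      = (I (c + x) ^ 2 - I (c - x) ^ 2) ^ 2 := by ring
    _ ≤ 16 * (I c * probit c * x) ^ 2 := sq_gaussianProfile_sq_first_difference_le hx hc
    _ = 8 * I c ^ 2 * (2 * I c ^ 2 + 2 * (probit c ^ 2 - 1) * x ^ 2 + 2 * x ^ 2 - 2 * I c ^ 2) := by
      ring
    _ ≤ 8 * I c ^ 2 * (I (c - x) ^ 2 + I (c + x) ^ 2 + 2 * x ^ 2 - 2 * I c ^ 2) := by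
      gcongr ?_ * (?_ + _ - _)
      exact gaussianProfile_sq_second_difference_ge hx hc
    _ = _ := by ring

theorem gaussianProfile_average_le {a b : ℝ} (ha : a ∈ Set.Ioo 0 1) (hb : b ∈ Set.Ioo 0 1) :
    I ((a + b) / 2) ≤
      (√(I a ^ 2 + ((a - b) / 2) ^ 2) + √(I b ^ 2 + ((a - b) / 2) ^ 2)) / 2 := by
  wlog hba : b ≤ a generalizing a b
  · have h := this hb ha (le_of_not_ge hba)
    rwa [add_comm b a, add_comm (√_), ← neg_sub a b, neg_div, neg_sq] at h
  have hleft : (a + b) / 2 - (a - b) / 2 = b := by ring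
  have hright : (a + b) / 2 + (a - b) / 2 = a := by ring
  have h := two_mul_gaussianProfile_le (c := (a + b) / 2) (x := (a - b) / 2) (by linarith)
    (by rw [hleft, hright]; exact Set.Icc_subset_Ioo hb.1 ha.2)
  rw [hleft, hright] at h
  linarith

end TwoPoint

section IntegralInequalities

variable {Ω : Type*} [MeasurableSpace Ω] {μ : Measure Ω}

theorem integral_mem_of_ordConnected [IsProbabilityMeasure μ] {s : Set ℝ} (hs : s.OrdConnected)
    {f : Ω → ℝ} (hf : Integrable f μ) (hfs : ∀ x, f x ∈ s) : ∫ x, f x ∂μ ∈ s := by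
  obtain ⟨x, hx⟩ := exists_le_integral hf
  obtain ⟨y, hy⟩ := exists_integral_le hf
  exact hs.out (hfs x) (hfs y) ⟨hx, hy⟩

theorem sqrt_sq_integral_add_sq_integral_le {f g : Ω → ℝ} (hf : Integrable f μ)
    (hg : Integrable g μ) :
    √((∫ x, f x ∂μ) ^ 2 + (∫ x, g x ∂μ) ^ 2) ≤ ∫ x, √(f x ^ 2 + g x ^ 2) ∂μ := by
  have h := norm_integral_le_integral_norm (μ := μ) fun x => (f x + g x * Complex.I : ℂ)
  simp_rw [Complex.norm_add_mul_I] at h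
  rwa [integral_add hf.ofReal (hg.ofReal.mul_const _), integral_mul_const,
    integral_complex_ofReal, integral_complex_ofReal, Complex.norm_add_mul_I] at h

theorem sqrt_sq_add_sq_integral_le {F g D : Ω → ℝ} {m : ℝ} (hm : 0 ≤ m)
    (hmF : m ≤ ∫ x, √(F x) ∂μ) (hF : ∀ x, 0 ≤ F x) (hgD : ∀ x, |g x| ≤ D x)
    (hF_int : Integrable (fun x => √(F x)) μ) (hg_int : Integrable g μ)
    (hFD_int : Integrable (fun x => √(F x + D x ^ 2)) μ) :
    √(m ^ 2 + (∫ x, g x ∂μ) ^ 2) ≤ ∫ x, √(F x + D x ^ 2) ∂μ := by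
  have hpoint (x : Ω) : √(√(F x) ^ 2 + g x ^ 2) ≤ √(F x + D x ^ 2) := by
    rw [sq_sqrt (hF x), ← sq_abs (g x)]
    gcongr
    exact hgD x
  calc √(m ^ 2 + (∫ x, g x ∂μ) ^ 2)
      ≤ √((∫ x, √(F x) ∂μ) ^ 2 + (∫ x, g x ∂μ) ^ 2) := by gcongr
    _ ≤ ∫ x, √(√(F x) ^ 2 + g x ^ 2) ∂μ := sqrt_sq_integral_add_sq_integral_le hF_int hg_int
    _ ≤ ∫ x, √(F x + D x ^ 2) ∂μ :=
      integral_mono_of_nonneg (ae_of_all _ fun x => sqrt_nonneg _) hFD_int (ae_of_all _ hpoint)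

end IntegralInequalities

section SignedSums

variable {E : Type*} [AddCommGroup E] [MeasurableSpace E]

/-- The law of the random signed sum `±v₁ ± ⋯ ± vₖ` of the vectors of a list, with independent fair
signs. -/
noncomputable def signedSumLaw : List E → Measure E
  | [] => Measure.dirac 0
  | v :: L => (2⁻¹ : ℝ≥0∞) • (signedSumLaw L).map (· + v) +
      (2⁻¹ : ℝ≥0∞) • (signedSumLaw L).map (· - v)

variable [MeasurableAdd E]

instance isProbabilityMeasure_signedSumLaw (L : List E) :
    IsProbabilityMeasure (signedSumLaw L) := by
  induction L with
  | nil => exact Measure.dirac.isProbabilityMeasure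
  | cons v L ih =>
    constructor
    have hadd : (signedSumLaw L).map (· + v) Set.univ = 1 :=
      (MeasurableEquiv.addRight v).map_apply _ |>.trans measure_univ
    have hsub : (signedSumLaw L).map (· - v) Set.univ = 1 :=
      (MeasurableEquiv.subRight v).map_apply _ |>.trans measure_univ
    simp [signedSumLaw, hadd, hsub, ENNReal.inv_two_add_inv_two]

variable [MeasurableSingletonClass E] {F : Type*} [NormedAddCommGroup F]

theorem integrable_signedSumLaw (L : List E) (f : E → F) : Integrable f (signedSumLaw L) := by
  induction L generalizing f with
  | nil => exact integrable_dirac (by finiteness)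
  | cons v L ih =>
    refine ((integrable_map_equiv (MeasurableEquiv.addRight v) f).2 (ih _)).smul_measure ?_
      |>.add_measure <|
        ((integrable_map_equiv (MeasurableEquiv.subRight v) f).2 (ih _)).smul_measure ?_
    all_goals simp

variable [NormedSpace ℝ F]

theorem integral_signedSumLaw_cons (v : E) (L : List E) (f : E → F) :
    ∫ x, f x ∂signedSumLaw (v :: L) =
      (2⁻¹ : ℝ) • (∫ x, f (x + v) ∂signedSumLaw L + ∫ x, f (x - v) ∂signedSumLaw L) := by
  have hint := integrable_signedSumLaw (v :: L) f
  rw [signedSumLaw] at hint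
  rw [signedSumLaw, integral_add_measure hint.left_of_add_measure hint.right_of_add_measure,
    integral_smul_measure, integral_smul_measure, ← smul_add]
  congr 1
  · simp
  · exact congrArg₂ _ (integral_map_equiv (MeasurableEquiv.addRight v) f)
      (integral_map_equiv (MeasurableEquiv.subRight v) f)

theorem gaussianProfile_integral_signedSumLaw_le (L : List E) {f : E → ℝ} {D : E → E → ℝ}
    (hf : ∀ x, f x ∈ Set.Ioo 0 1)
    (hadd : ∀ v ∈ L, ∀ x, |(f (x + v) - f (x - v)) / 2| ≤ D v (x + v))
    (hsub : ∀ v ∈ L, ∀ x, |(f (x + v) - f (x - v)) / 2| ≤ D v (x - v)) :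
    I (∫ x, f x ∂signedSumLaw L) ≤
      ∫ x, √(I (f x) ^ 2 + (L.map fun v => D v x ^ 2).sum) ∂signedSumLaw L := by
  induction L generalizing f D with
  | nil => simp [signedSumLaw, sqrt_sq (gaussianProfile_pos _).le]
  | cons v L ih =>
    set μ := signedSumLaw L
    let S (x : E) : ℝ := I (f x) ^ 2 + (L.map fun w => D w x ^ 2).sum
    have hint (g : E → ℝ) : Integrable g μ := integrable_signedSumLaw L g
    have hS (x : E) : 0 ≤ S x := by
      refine add_nonneg (sq_nonneg _) (List.sum_nonneg ?_)
      simp only [List.mem_map, forall_exists_index, and_imp, forall_apply_eq_imp_iff₂]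
      exact fun w _ => sq_nonneg _
    have ih_add : I (∫ x, f (x + v) ∂μ) ≤ ∫ x, √(S (x + v)) ∂μ :=
      ih (fun x => hf _)
        (fun w hw x => by
          simpa only [add_right_comm, sub_add_eq_add_sub] using hadd w (.tail _ hw) (x + v))
        (fun w hw x => by
          simpa only [add_right_comm, sub_add_eq_add_sub] using hsub w (.tail _ hw) (x + v))
    have ih_sub : I (∫ x, f (x - v) ∂μ) ≤ ∫ x, √(S (x - v)) ∂μ :=
      ih (fun x => hf _)
        (fun w hw x => by
          simpa only [sub_right_comm, sub_add_eq_add_sub] using hadd w (.tail _ hw) (x - v))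
        (fun w hw x => by
          simpa only [sub_right_comm, sub_add_eq_add_sub] using hsub w (.tail _ hw) (x - v))
    have htwo := gaussianProfile_average_le
      (integral_mem_of_ordConnected Set.ordConnected_Ioo (hint _) fun x => hf (x + v))
      (integral_mem_of_ordConnected Set.ordConnected_Ioo (hint _) fun x => hf (x - v))
    rw [← integral_sub (hint _) (hint _), ← integral_div] at htwo
    have hstep_add := sqrt_sq_add_sq_integral_le (gaussianProfile_pos _).le ih_add (fun x => hS _)
      (hadd v List.mem_cons_self) (hint _) (hint _) (hint _)
    have hstep_sub := sqrt_sq_add_sq_integral_le (gaussianProfile_pos _).le ih_sub (fun x => hS _)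
      (hsub v List.mem_cons_self) (hint _) (hint _) (hint _)
    simp only [integral_signedSumLaw_cons, List.map_cons, List.sum_cons, smul_eq_mul]
    simp only [S, add_assoc, add_comm (List.sum _)] at hstep_add hstep_sub
    rw [inv_mul_eq_div, inv_mul_eq_div]
    linarith

end SignedSums

section GaussianSteps

variable {E : Type*} [NormedAddCommGroup E] [InnerProductSpace ℝ E] [FiniteDimensional ℝ E]

variable (E) in
/-- The steps of a random walk in `E` whose endpoint is approximately standard Gaussian for large
`N`: each vector of an orthonormal basis, scaled by `1 / √N` and repeated `N` times. -/
noncomputable def gaussianSteps (N : ℕ) : List E :=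
  Finset.univ.toList.flatMap fun i => List.replicate N ((√N)⁻¹ • stdOrthonormalBasis ℝ E i)

theorem exists_eq_of_mem_gaussianSteps {N : ℕ} {v : E} (hv : v ∈ gaussianSteps E N) :
    ∃ i, v = (√N)⁻¹ • stdOrthonormalBasis ℝ E i := by
  obtain ⟨i, -, hi⟩ := List.mem_flatMap.1 hv
  exact ⟨i, List.eq_of_mem_replicate hi⟩

@[to_additive]
theorem prod_map_gaussianSteps {M : Type*} [CommMonoid M] (N : ℕ) (g : E → M) :
    ((gaussianSteps E N).map g).prod = ∏ i, g ((√N)⁻¹ • stdOrthonormalBasis ℝ E i) ^ N := by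
  rw [gaussianSteps, List.map_flatMap, List.flatMap_def, List.prod_flatten, List.map_map,
    ← Finset.prod_map_toList]
  simp [Function.comp_def]

end GaussianSteps

section CentralLimit

variable {E : Type*} [NormedAddCommGroup E] [InnerProductSpace ℝ E] [MeasurableSpace E]

theorem charFun_signedSumLaw [BorelSpace E] (L : List E) (t : E) :
    charFun (signedSumLaw L) t = (L.map fun v => (cos (inner ℝ v t) : ℂ)).prod := by
  induction L with
  | nil => simp [signedSumLaw, charFun_dirac]
  | cons v L ih =>
    rw [charFun_apply, integral_signedSumLaw_cons]
    simp only [inner_add_left, inner_sub_left, Complex.ofReal_add, Complex.ofReal_sub, add_mul,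
      sub_mul, Complex.exp_add, Complex.exp_sub]
    rw [integral_mul_const, integral_div, ← charFun_apply, ih, List.map_cons, List.prod_cons,
      Complex.ofReal_cos, Complex.cos, neg_mul, Complex.exp_neg, Complex.real_smul]
    push_cast
    ring

theorem tendsto_cos_inv_sqrt_mul_pow (t : ℝ) :
    Tendsto (fun N : ℕ => (cos ((√N)⁻¹ * t) : ℂ) ^ N) atTop (𝓝 (Complex.exp (-t ^ 2 / 2))) := by
  have h := tendsto_charFun_inv_sqrt_mul_pow (P := signedSumLaw [(1 : ℝ)]) (X := id) aemeasurable_id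
    (by rw [integral_signedSumLaw_cons]; simp [signedSumLaw])
    (by rw [integral_signedSumLaw_cons]; norm_num [signedSumLaw]) t
  simpa [charFun_signedSumLaw] using h

variable [FiniteDimensional ℝ E] [BorelSpace E]

theorem tendsto_charFun_signedSumLaw_gaussianSteps (t : E) :
    Tendsto (fun N => charFun (signedSumLaw (gaussianSteps E N)) t) atTop
      (𝓝 (charFun (stdGaussian E) t)) := by
  have h := tendsto_finsetProd Finset.univ fun i _ =>
    tendsto_cos_inv_sqrt_mul_pow (inner ℝ (stdOrthonormalBasis ℝ E i) t)
  have hlimit : ∏ i, Complex.exp (-(inner ℝ (stdOrthonormalBasis ℝ E i) t : ℝ) ^ 2 / 2) =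
      charFun (stdGaussian E) t := by
    rw [charFun_stdGaussian, ← Complex.exp_sum, ← Finset.sum_div, Finset.sum_neg_distrib,
      ← Complex.ofReal_pow ‖t‖, ← (stdOrthonormalBasis ℝ E).sum_sq_inner_right t]
    norm_cast
  simpa only [charFun_signedSumLaw, prod_map_gaussianSteps, real_inner_smul_left, hlimit] using h

theorem tendsto_integral_signedSumLaw_gaussianSteps {f : E → ℝ} (hf : Continuous f) {C : ℝ}
    (hC : ∀ x, ‖f x‖ ≤ C) :
    Tendsto (fun N => ∫ x, f x ∂signedSumLaw (gaussianSteps E N)) atTop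
      (𝓝 (∫ x, f x ∂stdGaussian E)) := by
  let law (N : ℕ) : ProbabilityMeasure E := ⟨signedSumLaw (gaussianSteps E N), inferInstance⟩
  have hlaw : Tendsto law atTop (𝓝 ⟨stdGaussian E, inferInstance⟩) :=
    ProbabilityMeasure.tendsto_iff_tendsto_charFun.2 tendsto_charFun_signedSumLaw_gaussianSteps
  exact ProbabilityMeasure.tendsto_iff_forall_integral_tendsto.1 hlaw
    (BoundedContinuousFunction.ofNormedAddCommGroup f hf C hC)

end CentralLimit

section GaussianBobkov

theorem abs_apply_add_sub_apply_le {E : Type*} [NormedAddCommGroup E] [NormedSpace ℝ E]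
    {f : E → ℝ} (hf : Differentiable ℝ f) {η δ : ℝ}
    (hδ : ∀ x y, dist x y ≤ δ → dist (fderiv ℝ f x) (fderiv ℝ f y) ≤ η) (x : E) {w : E}
    (hw : ‖w‖ ≤ δ) : |f (x + w) - f x| ≤ |fderiv ℝ f x w| + η * ‖w‖ := by
  have hmean := (convex_closedBall x δ).norm_image_sub_le_of_norm_fderiv_le' (𝕜 := ℝ)
    (fun y _ => hf y) (fun y hy => (dist_eq_norm _ (fderiv ℝ f x)).ge.trans (hδ y x hy))
    (Metric.mem_closedBall_self ((norm_nonneg w).trans hw))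
    (y := x + w) (mem_closedBall_iff_norm.2 (by rwa [add_sub_cancel_left]))
  rw [add_sub_cancel_left, norm_eq_abs] at hmean
  linarith [abs_sub_abs_le_abs_sub (f (x + w) - f x) (fderiv ℝ f x w)]

theorem abs_half_apply_add_sub_apply_sub_le {E : Type*} [NormedAddCommGroup E] [NormedSpace ℝ E]
    {f : E → ℝ} (hf : Differentiable ℝ f) {η δ : ℝ}
    (hδ : ∀ x y, dist x y ≤ δ → dist (fderiv ℝ f x) (fderiv ℝ f y) ≤ η) (x : E) {v : E}
    (hv : 2 * ‖v‖ ≤ δ) : |(f (x + v) - f (x - v)) / 2| ≤ |fderiv ℝ f (x - v) v| + η * ‖v‖ := by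
  have hnorm : ‖(2 : ℝ) • v‖ = 2 * ‖v‖ := by rw [norm_smul, norm_two]
  have h := abs_apply_add_sub_apply_le hf hδ (x - v) (hnorm.trans_le hv)
  rw [two_smul, sub_add_add_cancel, ← two_smul ℝ, hnorm, map_smul, smul_eq_mul, abs_mul,
    abs_two] at h
  rw [abs_div, abs_two]
  linarith

theorem sqrt_sq_add_sum_add_sq_le {ι : Type*} [Fintype ι] (c : ℝ) (a : ι → ℝ) {η : ℝ}
    (hη : 0 ≤ η) :
    √(c ^ 2 + ∑ i, (a i + η) ^ 2) ≤ √(c ^ 2 + ∑ i, a i ^ 2) + √(Fintype.card ι) * η := by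
  have h := norm_add_le (WithLp.toLp 2 (Option.elim · c a) : EuclideanSpace ℝ (Option ι))
    (WithLp.toLp 2 (Option.elim · 0 fun _ => η))
  simpa [EuclideanSpace.norm_eq, Fintype.sum_option, sqrt_mul, sqrt_sq hη] using h

variable {E : Type*} [NormedAddCommGroup E] [InnerProductSpace ℝ E] [FiniteDimensional ℝ E]

theorem sum_map_sq_gaussianSteps {N : ℕ} (hN : N ≠ 0) (ℓ : E →L[ℝ] ℝ) (η : ℝ) :
    ((gaussianSteps E N).map fun v => (|ℓ v| + η * ‖v‖) ^ 2).sum =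
      ∑ i, (|ℓ (stdOrthonormalBasis ℝ E i)| + η) ^ 2 := by
  rw [sum_map_gaussianSteps]
  refine Finset.sum_congr rfl fun i _ => ?_
  have hinv : (0 : ℝ) ≤ (√N)⁻¹ := by positivity
  rw [map_smul, smul_eq_mul, abs_mul, norm_smul, norm_eq_abs, abs_of_nonneg hinv,
    (stdOrthonormalBasis ℝ E).norm_eq_one, nsmul_eq_mul]
  have hinv_sq : (√N)⁻¹ ^ 2 * N = (1 : ℝ) := by
    rw [inv_pow, sq_sqrt (by positivity), inv_mul_cancel₀ (by positivity)]
  linear_combination (|ℓ (stdOrthonormalBasis ℝ E i)| + η) ^ 2 * hinv_sq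

variable [MeasurableSpace E] [BorelSpace E] {f : E → ℝ}

theorem eventually_gaussianProfile_integral_gaussianSteps_le (hf : Differentiable ℝ f)
    (hf01 : ∀ x, f x ∈ Set.Ioo 0 1) (huc : UniformContinuous (fderiv ℝ f)) {η : ℝ} (hη : 0 < η) :
    ∀ᶠ N in atTop, I (∫ x, f x ∂signedSumLaw (gaussianSteps E N)) ≤
      ∫ x, √(I (f x) ^ 2 + ‖fderiv ℝ f x‖ ^ 2) ∂signedSumLaw (gaussianSteps E N) +
        √(Module.finrank ℝ E) * η := by
  obtain ⟨δ, hδ, hfδ⟩ := Metric.uniformContinuous_iff_le.1 huc η hη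
  have hstep : Tendsto (fun N : ℕ => 2 * (√N)⁻¹) atTop (𝓝 0) := by
    simpa using (tendsto_inv_atTop_zero.comp
      (tendsto_sqrt_atTop.comp tendsto_natCast_atTop_atTop)).const_mul 2
  filter_upwards [hstep.eventually (gt_mem_nhds hδ), eventually_ne_atTop 0] with N hNδ hN
  have hincrement (v : E) (hv : v ∈ gaussianSteps E N) : 2 * ‖v‖ ≤ δ := by
    obtain ⟨i, rfl⟩ := exists_eq_of_mem_gaussianSteps hv
    rw [norm_smul, (stdOrthonormalBasis ℝ E).norm_eq_one, mul_one,
      norm_of_nonneg (by positivity)]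
    exact hNδ.le
  have hdiscrete := gaussianProfile_integral_signedSumLaw_le (gaussianSteps E N)
    (D := fun v x => |fderiv ℝ f x v| + η * ‖v‖) hf01
    (fun v hv x => by
      have h := abs_half_apply_add_sub_apply_sub_le hf hfδ x (v := -v)
        (by rw [norm_neg]; exact hincrement v hv)
      rwa [sub_neg_eq_add, ← sub_eq_add_neg, map_neg, abs_neg, norm_neg, ← neg_sub, neg_div,
        abs_neg] at h)
    (fun v hv x => abs_half_apply_add_sub_apply_sub_le hf hfδ x (hincrement v hv))
  set μ := signedSumLaw (gaussianSteps E N)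
  have hsum : ∫ x, √(I (f x) ^ 2 + ‖fderiv ℝ f x‖ ^ 2) ∂μ + √(Module.finrank ℝ E) * η =
      ∫ x, (√(I (f x) ^ 2 + ‖fderiv ℝ f x‖ ^ 2) + √(Module.finrank ℝ E) * η) ∂μ := by
    rw [integral_add (integrable_signedSumLaw _ _) (integrable_const _), integral_const,
      probReal_univ, one_smul]
  rw [hsum]
  refine hdiscrete.trans (integral_mono (integrable_signedSumLaw _ _)
    (integrable_signedSumLaw _ _) fun x => ?_)
  have hmink := sqrt_sq_add_sum_add_sq_le (I (f x))
    (fun i => |fderiv ℝ f x (stdOrthonormalBasis ℝ E i)|) hη.le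
  simpa [sum_map_sq_gaussianSteps hN, (stdOrthonormalBasis ℝ E).norm_dual] using hmink

theorem continuous_gaussianProfile_comp {X : Type*} [TopologicalSpace X] {f : X → ℝ}
    (hf : Continuous f) (hf01 : ∀ x, f x ∈ Set.Ioo 0 1) : Continuous fun x => I (f x) :=
  continuous_iff_continuousAt.2 fun x =>
    (hasDerivAt_gaussianProfile (hf01 x)).continuousAt.comp (f := f) hf.continuousAt

theorem gaussianProfile_integral_stdGaussian_le (hf : Differentiable ℝ f)
    (hf01 : ∀ x, f x ∈ Set.Ioo 0 1) (huc : UniformContinuous (fderiv ℝ f)) {M : ℝ}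
    (hM : ∀ x, ‖fderiv ℝ f x‖ ≤ M) :
    I (∫ x, f x ∂stdGaussian E) ≤
      ∫ x, √(I (f x) ^ 2 + ‖fderiv ℝ f x‖ ^ 2) ∂stdGaussian E := by
  have hf_norm (x : E) : ‖f x‖ ≤ 1 := by
    rw [norm_eq_abs, abs_of_pos (hf01 x).1]
    exact (hf01 x).2.le
  have hmem : ∫ x, f x ∂stdGaussian E ∈ Set.Ioo 0 1 :=
    integral_mem_of_ordConnected Set.ordConnected_Ioo
      (.of_bound hf.continuous.aestronglyMeasurable 1 (ae_of_all _ hf_norm)) hf01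
  have hleft := (hasDerivAt_gaussianProfile hmem).continuousAt.tendsto.comp
    (tendsto_integral_signedSumLaw_gaussianSteps hf.continuous hf_norm)
  have hright := tendsto_integral_signedSumLaw_gaussianSteps
    (((continuous_gaussianProfile_comp hf.continuous hf01).pow 2).add
      (huc.continuous.norm.pow 2)).sqrt (C := √(φ 0 ^ 2 + M ^ 2)) fun x => by
    rw [norm_of_nonneg (sqrt_nonneg _)]
    exact sqrt_le_sqrt (add_le_add
      (pow_le_pow_left₀ (gaussianProfile_pos _).le (gaussianProfile_le _) 2)
      (pow_le_pow_left₀ (norm_nonneg _) (hM x) 2))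
  have happrox (η : ℝ) (hη : 0 < η) := le_of_tendsto_of_tendsto hleft
    (hright.add_const (√(Module.finrank ℝ E) * η))
    (eventually_gaussianProfile_integral_gaussianSteps_le hf hf01 huc hη)
  have hlimit : Tendsto (fun η => ∫ x, √(I (f x) ^ 2 + ‖fderiv ℝ f x‖ ^ 2) ∂stdGaussian E +
      √(Module.finrank ℝ E) * η) (𝓝[>] 0)
      (𝓝 (∫ x, √(I (f x) ^ 2 + ‖fderiv ℝ f x‖ ^ 2) ∂stdGaussian E)) :=
    (Continuous.tendsto' (by fun_prop) 0 _ (by simp)).mono_left nhdsWithin_le_nhds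
  exact ge_of_tendsto hlimit (eventually_nhdsWithin_of_forall happrox)

end GaussianBobkov

section SmoothedVolume

variable {Ω : Type*} [MeasurableSpace Ω] {μ : Measure Ω}

theorem integrable_stdNormalCDF_comp [IsFiniteMeasure μ] {h : Ω → ℝ} (hh : Measurable h) :
    Integrable (fun x => Φ (h x)) μ :=
  .of_bound (continuous_stdNormalCDF.measurable.comp hh).aestronglyMeasurable 1
    (ae_of_all _ fun x => by
      rw [norm_of_nonneg (stdNormalCDF_pos _).le]
      exact (stdNormalCDF_lt_one _).le)

theorem integrable_gaussianPDFReal_comp [IsFiniteMeasure μ] {h : Ω → ℝ} (hh : Measurable h) :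
    Integrable (fun x => φ (h x)) μ :=
  .of_bound ((continuous_gaussianPDFReal 0 1).measurable.comp hh).aestronglyMeasurable (φ 0)
    (ae_of_all _ fun x => by
      rw [norm_of_nonneg (gaussianPDFReal_zero_one_pos _).le]
      exact gaussianPDFReal_zero_one_le _)

/-- A smooth approximation to the measure of the sublevel set `{d ≤ s}`, with the indicator of
`(-∞, 0]` replaced by the normal CDF of slope `k`; it becomes exact as `k → ∞`. -/
noncomputable def smoothedVolume (μ : Measure Ω) (d : Ω → ℝ) (k s : ℝ) : ℝ :=
  ∫ x, Φ (k * (s - d x)) ∂μ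

variable [IsProbabilityMeasure μ] {d : Ω → ℝ} {k : ℝ}

theorem smoothedVolume_mem_Ioo (hd : Measurable d) (k s : ℝ) :
    smoothedVolume μ d k s ∈ Set.Ioo 0 1 :=
  integral_mem_of_ordConnected Set.ordConnected_Ioo
    (integrable_stdNormalCDF_comp (by fun_prop)) fun _ => stdNormalCDF_mem_Ioo _

theorem hasDerivAt_smoothedVolume (hd : Measurable d) (hk : 0 ≤ k) (s : ℝ) :
    HasDerivAt (smoothedVolume μ d k) (k * ∫ x, φ (k * (s - d x)) ∂μ) s := by
  have hpoint (x : Ω) (s : ℝ) :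
      HasDerivAt (fun s => Φ (k * (s - d x))) (k * φ (k * (s - d x))) s := by
    have hinner := ((hasDerivAt_id s).sub_const (d x)).const_mul k
    exact ((hasDerivAt_stdNormalCDF _).comp s hinner).congr_deriv (by simp [mul_comm])
  have h := hasDerivAt_integral_of_dominated_loc_of_deriv_le (μ := μ) (x₀ := s)
    (bound := fun _ => k * φ 0) univ_mem
    (Eventually.of_forall fun s =>
      (integrable_stdNormalCDF_comp (h := fun x => k * (s - d x)) (by fun_prop)).1)
    (integrable_stdNormalCDF_comp (by fun_prop))
    ((integrable_gaussianPDFReal_comp (by fun_prop)).const_mul k).1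
    (ae_of_all _ fun x s _ => by
      rw [norm_of_nonneg (mul_nonneg hk (gaussianPDFReal_zero_one_pos _).le)]
      exact mul_le_mul_of_nonneg_left (gaussianPDFReal_zero_one_le _) hk)
    (integrable_const _) (ae_of_all _ fun x s _ => hpoint x s)
  exact h.2.congr_deriv (integral_const_mul _ _)

theorem stdNormalCDF_mul_measureReal_le_smoothedVolume (hd : Measurable d) (hk : 0 ≤ k)
    (a δ : ℝ) : Φ (k * δ) * μ.real {x | d x ≤ a} ≤ smoothedVolume μ d k (a + δ) := by
  have hmeas : MeasurableSet {x | d x ≤ a} := measurableSet_le hd measurable_const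
  calc Φ (k * δ) * μ.real {x | d x ≤ a}
      = ∫ x, {x | d x ≤ a}.indicator (fun _ => Φ (k * δ)) x ∂μ := by
        rw [integral_indicator_const _ hmeas, smul_eq_mul, mul_comm]
    _ ≤ smoothedVolume μ d k (a + δ) := by
        refine integral_mono ((integrable_const _).indicator hmeas)
          (integrable_stdNormalCDF_comp (by fun_prop)) fun x => ?_
        by_cases hx : x ∈ {x | d x ≤ a}
        · rw [Set.indicator_of_mem hx]
          refine strictMono_stdNormalCDF.monotone (mul_le_mul_of_nonneg_left ?_ hk)
          linarith [Set.mem_ofPred.1 hx]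
        · rw [Set.indicator_of_notMem hx]
          exact (stdNormalCDF_pos _).le

theorem smoothedVolume_le_measureReal_add_stdNormalCDF (hd : Measurable d) (hk : 0 ≤ k)
    (b δ : ℝ) : smoothedVolume μ d k b ≤ μ.real {x | d x ≤ b + δ} + Φ (-(k * δ)) := by
  have hmeas : MeasurableSet {x | d x ≤ b + δ} := measurableSet_le hd measurable_const
  have hint : Integrable ({x | d x ≤ b + δ}.indicator fun _ => (1 : ℝ)) μ :=
    (integrable_const _).indicator hmeas
  calc smoothedVolume μ d k b
      ≤ ∫ x, ({x | d x ≤ b + δ}.indicator (fun _ => 1) x + Φ (-(k * δ))) ∂μ := by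
        refine integral_mono (integrable_stdNormalCDF_comp (by fun_prop))
          (hint.add (integrable_const _)) fun x => ?_
        by_cases hx : x ∈ {x | d x ≤ b + δ}
        · rw [Set.indicator_of_mem hx]
          linarith [stdNormalCDF_lt_one (k * (b - d x)), stdNormalCDF_pos (-(k * δ))]
        · rw [Set.indicator_of_notMem hx, zero_add, ← mul_neg]
          refine strictMono_stdNormalCDF.monotone (mul_le_mul_of_nonneg_left ?_ hk)
          linarith [not_le.1 (Set.mem_ofPred.not.1 hx)]
    _ = μ.real {x | d x ≤ b + δ} + Φ (-(k * δ)) := by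
        rw [integral_add hint (integrable_const _), integral_indicator_const _ hmeas,
          integral_const, probReal_univ, smul_eq_mul, mul_one, one_smul]

end SmoothedVolume

section StdNormalCDFComp

variable {E : Type*} [NormedAddCommGroup E] [NormedSpace ℝ E] {h : E → ℝ} {K : ℝ≥0}

theorem hasFDerivAt_stdNormalCDF_comp (hh : Differentiable ℝ h) (x : E) :
    HasFDerivAt (fun x => Φ (h x)) (φ (h x) • fderiv ℝ h x) x :=
  (hasDerivAt_stdNormalCDF (h x)).comp_hasFDerivAt x (hh x).hasFDerivAt

theorem fderiv_stdNormalCDF_comp (hh : Differentiable ℝ h) :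
    fderiv ℝ (fun x => Φ (h x)) = fun x => φ (h x) • fderiv ℝ h x :=
  funext fun x => (hasFDerivAt_stdNormalCDF_comp hh x).fderiv

theorem norm_fderiv_stdNormalCDF_comp_le (hh : Differentiable ℝ h)
    (hlip : LipschitzWith K h) (x : E) : ‖fderiv ℝ (fun x => Φ (h x)) x‖ ≤ φ (h x) * K := by
  rw [fderiv_stdNormalCDF_comp hh, norm_smul, norm_of_nonneg (gaussianPDFReal_zero_one_pos _).le]
  exact mul_le_mul_of_nonneg_left (norm_fderiv_le_of_lipschitz ℝ hlip)
    (gaussianPDFReal_zero_one_pos _).le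

theorem uniformContinuous_fderiv_stdNormalCDF_comp (hh : ContDiff ℝ 1 h)
    (hlip : LipschitzWith K h) (hproper : Tendsto h (cocompact E) (cocompact ℝ)) :
    UniformContinuous (fderiv ℝ fun x => Φ (h x)) := by
  have hcont : Continuous (fderiv ℝ fun x => Φ (h x)) := by
    rw [fderiv_stdNormalCDF_comp (hh.differentiable one_ne_zero)]
    exact ((continuous_gaussianPDFReal 0 1).comp hh.continuous).smul
      (hh.continuous_fderiv one_ne_zero)
  refine hcont.uniformContinuous_of_tendsto_cocompact (x := 0) ?_
  refine squeeze_zero_norm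
    (norm_fderiv_stdNormalCDF_comp_le (hh.differentiable one_ne_zero) hlip) ?_
  simpa using (tendsto_gaussianPDFReal_zero_one_cocompact.comp hproper).mul_const (K : ℝ)

end StdNormalCDFComp

section SmoothIsoperimetry

variable {E : Type*} [NormedAddCommGroup E] [InnerProductSpace ℝ E] [FiniteDimensional ℝ E]
  [MeasurableSpace E] [BorelSpace E]

theorem gaussianProfile_integral_stdNormalCDF_comp_le {h : E → ℝ} {K : ℝ≥0} (hh : ContDiff ℝ 1 h)
    (hlip : LipschitzWith K h) (hproper : Tendsto h (cocompact E) (cocompact ℝ)) :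
    I (∫ x, Φ (h x) ∂stdGaussian E) ≤ √(1 + K ^ 2) * ∫ x, φ (h x) ∂stdGaussian E := by
  have hdiff : Differentiable ℝ h := hh.differentiable one_ne_zero
  have hnorm := norm_fderiv_stdNormalCDF_comp_le hdiff hlip
  have hbobkov := gaussianProfile_integral_stdGaussian_le (M := φ 0 * K)
    (fun x => (hasFDerivAt_stdNormalCDF_comp hdiff x).differentiableAt)
    (fun x => stdNormalCDF_mem_Ioo (h x))
    (uniformContinuous_fderiv_stdNormalCDF_comp hh hlip hproper)
    fun x => (hnorm x).trans (by gcongr; exact gaussianPDFReal_zero_one_le _)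
  refine hbobkov.trans ?_
  rw [← integral_const_mul]
  refine integral_mono_of_nonneg (ae_of_all _ fun x => sqrt_nonneg _)
    ((integrable_gaussianPDFReal_comp hh.continuous.measurable).const_mul _)
    (ae_of_all _ fun x => ?_)
  have hφ := (gaussianPDFReal_zero_one_pos (h x)).le
  calc √(I (Φ (h x)) ^ 2 + ‖fderiv ℝ (fun x => Φ (h x)) x‖ ^ 2)
      ≤ √(φ (h x) ^ 2 + (φ (h x) * K) ^ 2) := by
        rw [gaussianProfile_stdNormalCDF]
        gcongr
        exact hnorm x
    _ = √(1 + K ^ 2) * φ (h x) := by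
        rw [← sqrt_sq hφ, ← sqrt_mul (by positivity), sqrt_sq hφ]
        ring_nf

variable {d : E → ℝ}

theorem probit_smoothedVolume_add_le (hd : ContDiff ℝ 1 d) (hlip : LipschitzWith 1 d)
    (hproper : Tendsto d (cocompact E) atTop) {k : ℝ} (hk : 0 < k) {a b : ℝ} (hab : a ≤ b) :
    probit (smoothedVolume (stdGaussian E) d k a) + k / √(1 + k ^ 2) * (b - a) ≤
      probit (smoothedVolume (stdGaussian E) d k b) := by
  have hmeas : Measurable d := hd.continuous.measurable
  have hbobkov (s : ℝ) : I (smoothedVolume (stdGaussian E) d k s) ≤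
      √(1 + k ^ 2) * ∫ x, φ (k * (s - d x)) ∂stdGaussian E := by
    lift k to ℝ≥0 using hk.le
    refine gaussianProfile_integral_stdNormalCDF_comp_le (by fun_prop) ?_ ?_
    · refine LipschitzWith.of_dist_le_mul fun x y => ?_
      rw [dist_eq, ← mul_sub, sub_sub_sub_cancel_left, abs_mul, NNReal.abs_eq, ← dist_eq,
        dist_comm x y]
      gcongr
      simpa using hlip.dist_le_mul y x
    · refine Tendsto.mono_right ?_ atBot_le_cocompact
      exact (tendsto_const_nhds.add_atBot
        (tendsto_neg_atTop_atBot.comp hproper)).const_mul_atBot hk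
  have hderiv (s : ℝ) := ((hasDerivAt_probit (smoothedVolume_mem_Ioo hmeas k s)).comp s
    (hasDerivAt_smoothedVolume (μ := stdGaussian E) hmeas hk.le s)).sub
      ((hasDerivAt_id s).const_mul (k / √(1 + k ^ 2)))
  have hmono := monotone_of_hasDerivAt_nonneg hderiv fun s => by
    have hI := gaussianProfile_pos (smoothedVolume (stdGaussian E) d k s)
    have hsqrt : 0 < √(1 + k ^ 2) := by positivity
    rw [Pi.zero_apply, sub_nonneg, mul_one, inv_mul_eq_div, div_le_div_iff₀ hsqrt hI, mul_assoc,
      mul_comm _ (√_)]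
    exact mul_le_mul_of_nonneg_left (hbobkov s) hk.le
  have h := hmono hab
  simp only [Pi.sub_apply, Function.comp_apply, id] at h
  linarith

end SmoothIsoperimetry

theorem tendsto_div_sqrt_one_add_sq : Tendsto (fun k : ℝ => k / √(1 + k ^ 2)) atTop (𝓝 1) := by
  have hcont : Continuous fun y : ℝ => (√(1 + y ^ 2))⁻¹ :=
    Continuous.inv₀ (by fun_prop) fun y => by positivity
  have hlim : Tendsto (fun k : ℝ => (√(1 + k⁻¹ ^ 2))⁻¹) atTop (𝓝 1) := by
    simpa [Function.comp_def] using (hcont.tendsto 0).comp tendsto_inv_atTop_zero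
  refine hlim.congr' ?_
  filter_upwards [eventually_gt_atTop 0] with k hk
  have hfactor : 1 + k ^ 2 = k ^ 2 * (1 + k⁻¹ ^ 2) := by field_simp; ring
  rw [hfactor, sqrt_mul (sq_nonneg k), sqrt_sq hk.le, ← div_div, div_self hk.ne', one_div]

section Mollification

variable {E : Type*} [NormedAddCommGroup E] {g : E → ℝ} {K : ℝ≥0}

theorem lipschitzWith_convolution [MeasurableSpace E] {μ : Measure E} {ρ : E → ℝ}
    (hρ : ∀ x, 0 ≤ ρ x) (hρ_integral : ∫ x, ρ x ∂μ = 1) (hg : LipschitzWith K g)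
    (hconv : ConvolutionExists ρ g (.lsmul ℝ ℝ) μ) :
    LipschitzWith K (convolution ρ g (.lsmul ℝ ℝ) μ) := by
  refine LipschitzWith.of_dist_le_mul fun x y => ?_
  rw [dist_eq_norm, convolution_def, convolution_def, ← integral_sub (hconv x) (hconv y)]
  calc ‖∫ t, (ρ t * g (x - t) - ρ t * g (y - t)) ∂μ‖
      ≤ ∫ t, ρ t * (K * dist x y) ∂μ := by
        refine norm_integral_le_of_norm_le
          ((integrable_of_integral_eq_one hρ_integral).mul_const _) (ae_of_all _ fun t => ?_)
        rw [← mul_sub, norm_mul, norm_of_nonneg (hρ t), ← dist_eq_norm]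
        refine mul_le_mul_of_nonneg_left ?_ (hρ t)
        simpa using hg.dist_le_mul (x - t) (y - t)
    _ = K * dist x y := by rw [integral_mul_const, hρ_integral, one_mul]

theorem exists_contDiff_lipschitzWith_dist_le [NormedSpace ℝ E] [FiniteDimensional ℝ E]
    (hg : LipschitzWith K g) {δ : ℝ} (hδ : 0 < δ) :
    ∃ d : E → ℝ, ContDiff ℝ 1 d ∧ LipschitzWith K d ∧ ∀ x, dist (d x) (g x) ≤ K * δ := by
  borelize E
  let μ : Measure E := Measure.addHaar
  let ρ : ContDiffBump (0 : E) := ⟨δ / 2, δ, half_pos hδ, half_lt_self hδ⟩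
  have hg_int : LocallyIntegrable g μ := hg.continuous.locallyIntegrable
  refine ⟨convolution (ρ.normed μ) g (.lsmul ℝ ℝ) μ, ?_, ?_, fun x => ?_⟩
  · exact ρ.hasCompactSupport_normed.contDiff_convolution_left _ ρ.contDiff_normed hg_int
  · exact lipschitzWith_convolution ρ.nonneg_normed ρ.integral_normed hg
      (ρ.hasCompactSupport_normed.convolutionExists_left _ ρ.continuous_normed hg_int)
  · refine ρ.dist_normed_convolution_le hg_int.aestronglyMeasurable fun y hy => ?_
    exact (hg.dist_le_mul y x).trans (by gcongr; exact (Metric.mem_ball.1 hy).le)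

end Mollification

theorem le_measureReal_sublevel_of_forall_gt {Ω : Type*} [MeasurableSpace Ω] {μ : Measure Ω}
    [IsProbabilityMeasure μ] {g : Ω → ℝ} (hg : Measurable g) {a c : ℝ}
    (h : ∀ b > a, c ≤ μ.real {x | g x ≤ b}) : c ≤ μ.real {x | g x ≤ a} := by
  have : IsProbabilityMeasure (μ.map g) := Measure.isProbabilityMeasure_map hg.aemeasurable
  have hcdf (b : ℝ) : μ.real {x | g x ≤ b} = cdf (μ.map g) b := by
    rw [cdf_eq_real, map_measureReal_apply hg measurableSet_Iic]
    rfl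
  simp only [hcdf] at h ⊢
  refine ge_of_tendsto (((cdf (μ.map g)).right_continuous a).mono Set.Ioi_subset_Ici_self) ?_
  filter_upwards [self_mem_nhdsWithin] with b hb using h b hb

section InfDist

variable {X : Type*} [PseudoMetricSpace X] {K : Set X}

theorem cthickening_eq_infDist_le {r : ℝ} (hr : 0 ≤ r) (hK : K.Nonempty) :
    Metric.cthickening r K = {x | Metric.infDist x K ≤ r} :=
  Set.ext fun _ => ENNReal.le_ofReal_iff_toReal_le (Metric.infEDist_ne_top hK) hr

theorem tendsto_infDist_cocompact_atTop [ProperSpace X] (hK : Bornology.IsBounded K)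
    (hne : K.Nonempty) :
    Tendsto (Metric.infDist · K) (cocompact X) atTop := by
  obtain ⟨y, hy⟩ := hne
  refine tendsto_atTop_mono (fun x => ?_)
    (tendsto_atTop_add_const_right _ (-Metric.diam K) (tendsto_dist_right_cocompact_atTop y))
  linarith [Metric.dist_le_infDist_add_diam (x := x) hK hy]

end InfDist

section GaussianIsoperimetry

variable {E : Type*} [NormedAddCommGroup E] [InnerProductSpace ℝ E] [FiniteDimensional ℝ E]
  [MeasurableSpace E] [BorelSpace E] {t a r : ℝ}

theorem stdNormalCDF_add_le_measureReal_sublevel_of_contDiff {d : E → ℝ} (hd : ContDiff ℝ 1 d)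
    (hlip : LipschitzWith 1 d) (hproper : Tendsto d (cocompact E) atTop)
    (ht : Φ t < (stdGaussian E).real {x | d x ≤ a}) (hr : 0 ≤ r) {b : ℝ} (hb : a + r < b) :
    Φ (t + r) ≤ (stdGaussian E).real {x | d x ≤ b} := by
  have hmeas : Measurable d := hd.continuous.measurable
  obtain ⟨δ, hδ, rfl⟩ : ∃ δ > 0, b = a + δ + r + δ := ⟨(b - a - r) / 2, by linarith, by ring⟩
  have hkδ : Tendsto (fun k : ℝ => k * δ) atTop atTop := tendsto_id.atTop_mul_const hδ
  have hlower : Tendsto (fun k : ℝ => Φ (k * δ) * (stdGaussian E).real {x | d x ≤ a}) atTop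
      (𝓝 ((stdGaussian E).real {x | d x ≤ a})) := by
    simpa using (tendsto_stdNormalCDF_atTop.comp hkδ).mul_const _
  have hupper : Tendsto
      (fun k : ℝ => (stdGaussian E).real {x | d x ≤ a + δ + r + δ} + Φ (-(k * δ))) atTop
      (𝓝 ((stdGaussian E).real {x | d x ≤ a + δ + r + δ})) := by
    simpa using (tendsto_stdNormalCDF_atBot.comp (tendsto_neg_atTop_atBot.comp hkδ)).const_add _
  have hshift : Tendsto (fun k : ℝ => Φ (t + k / √(1 + k ^ 2) * r)) atTop (𝓝 (Φ (t + r))) := by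
    refine (continuous_stdNormalCDF.tendsto _).comp ?_
    simpa using (tendsto_div_sqrt_one_add_sq.mul_const r).const_add t
  refine le_of_tendsto_of_tendsto hshift hupper ?_
  filter_upwards [eventually_gt_atTop 0, hlower.eventually (lt_mem_nhds ht)] with k hk hkt
  set S := smoothedVolume (stdGaussian E) d k
  have hS (s : ℝ) : S s ∈ Set.Ioo 0 1 := smoothedVolume_mem_Ioo hmeas k s
  have hstart : t ≤ probit (S (a + δ)) := by
    rw [← strictMono_stdNormalCDF.le_iff_le, stdNormalCDF_probit (hS _)]
    exact hkt.le.trans (stdNormalCDF_mul_measureReal_le_smoothedVolume hmeas hk.le a δ)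
  calc Φ (t + k / √(1 + k ^ 2) * r)
      ≤ Φ (probit (S (a + δ + r))) := strictMono_stdNormalCDF.monotone <| by
        have hgrowth := probit_smoothedVolume_add_le hd hlip hproper hk
          (le_add_of_nonneg_right hr : a + δ ≤ a + δ + r)
        rw [add_sub_cancel_left] at hgrowth
        exact (add_le_add_left hstart _).trans hgrowth
    _ = S (a + δ + r) := stdNormalCDF_probit (hS _)
    _ ≤ _ := smoothedVolume_le_measureReal_add_stdNormalCDF hmeas hk.le _ δ

theorem stdNormalCDF_add_le_measureReal_sublevel {g : E → ℝ} (hlip : LipschitzWith 1 g)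
    (hproper : Tendsto g (cocompact E) atTop) (ht : Φ t < (stdGaussian E).real {x | g x ≤ a})
    (hr : 0 ≤ r) : Φ (t + r) ≤ (stdGaussian E).real {x | g x ≤ a + r} := by
  refine le_measureReal_sublevel_of_forall_gt hlip.continuous.measurable fun b hb => ?_
  obtain ⟨δ, hδ, rfl⟩ : ∃ δ > 0, b = a + r + 3 * δ := ⟨(b - a - r) / 3, by linarith, by ring⟩
  obtain ⟨d, hd, hd_lip, hdg⟩ := exists_contDiff_lipschitzWith_dist_le hlip hδ
  have hdg (x : E) : |d x - g x| ≤ δ := by simpa [dist_eq] using hdg x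
  have hd_proper : Tendsto d (cocompact E) atTop :=
    tendsto_atTop_mono (fun x => by linarith [(abs_le.1 (hdg x)).1])
      (tendsto_atTop_add_const_right _ (-δ) hproper)
  have hsub : (stdGaussian E).real {x | g x ≤ a} ≤ (stdGaussian E).real {x | d x ≤ a + δ} :=
    measureReal_mono fun x (hx : g x ≤ a) =>
      show d x ≤ a + δ by linarith [(abs_le.1 (hdg x)).2]
  calc Φ (t + r)
      ≤ (stdGaussian E).real {x | d x ≤ a + r + 2 * δ} :=
        stdNormalCDF_add_le_measureReal_sublevel_of_contDiff hd hd_lip hd_proper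
          (ht.trans_le hsub) hr (by linarith)
    _ ≤ (stdGaussian E).real {x | g x ≤ a + r + 3 * δ} :=
        measureReal_mono fun x (hx : d x ≤ a + r + 2 * δ) =>
          show g x ≤ a + r + 3 * δ by linarith [(abs_le.1 (hdg x)).1]

theorem stdNormalCDF_add_le_measureReal_cthickening {K : Set E} (hK : IsCompact K)
    (ht : Φ t < (stdGaussian E).real K) (hr : 0 ≤ r) :
    Φ (t + r) ≤ (stdGaussian E).real (Metric.cthickening r K) := by
  have hne : K.Nonempty := nonempty_of_measureReal_ne_zero ((stdNormalCDF_pos t).trans ht).ne'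
  have hK_eq : {x | Metric.infDist x K ≤ 0} = K := by
    rw [← cthickening_eq_infDist_le le_rfl hne, Metric.cthickening_zero, hK.isClosed.closure_eq]
  have hsublevel := stdNormalCDF_add_le_measureReal_sublevel (Metric.lipschitz_infDist_pt K)
    (tendsto_infDist_cocompact_atTop hK.isBounded hne) (hK_eq.symm ▸ ht) hr
  rwa [zero_add, ← cthickening_eq_infDist_le hr hne] at hsublevel

theorem stdNormalCDF_add_le_measureReal_dist_le {A : Set E} (hA : MeasurableSet A) {α : ℝ}
    (hα : Φ α ≤ (stdGaussian E).real A) (hr : 0 ≤ r) :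
    Φ (α + r) ≤ (stdGaussian E).real {x | ∃ y ∈ A, dist x y ≤ r} := by
  have hlim : Tendsto (fun t => Φ (t + r)) (𝓝[<] α) (𝓝 (Φ (α + r))) :=
    ((continuous_stdNormalCDF.comp (continuous_add_const r)).tendsto α).mono_left
      nhdsWithin_le_nhds
  refine le_of_tendsto hlim ?_
  filter_upwards [self_mem_nhdsWithin] with t ht
  have hlt : ENNReal.ofReal (Φ t) < stdGaussian E A := by
    rw [ENNReal.ofReal_lt_iff_lt_toReal (stdNormalCDF_pos t).le (measure_ne_top _ _)]
    exact (strictMono_stdNormalCDF ht).trans_le hα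
  obtain ⟨K, hKA, hK, hKt⟩ := hA.exists_lt_isCompact hlt
  rw [ENNReal.ofReal_lt_iff_lt_toReal (stdNormalCDF_pos t).le (measure_ne_top _ _)] at hKt
  refine (stdNormalCDF_add_le_measureReal_cthickening hK hKt hr).trans (measureReal_mono ?_)
  rw [hK.cthickening_eq_biUnion_closedBall hr]
  exact Set.iUnion₂_subset fun y hy x hx => ⟨y, hKA hy, hx⟩

end GaussianIsoperimetry

section LpDist

theorem sum_rpow_le_rpow_sum {ι : Type*} (s : Finset ι) {f : ι → ℝ} (hf : ∀ i ∈ s, 0 ≤ f i) {r : ℝ}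
    (hr : 1 ≤ r) : ∑ i ∈ s, f i ^ r ≤ (∑ i ∈ s, f i) ^ r := by
  classical
  induction s using Finset.induction_on with
  | empty => simp [zero_rpow (by linarith : r ≠ 0)]
  | insert i s hi ih =>
    rw [Finset.forall_mem_insert] at hf
    rw [Finset.sum_insert hi, Finset.sum_insert hi]
    exact (add_le_add_right (ih hf.2) _).trans
      (add_rpow_le_rpow_add hf.1 (Finset.sum_nonneg hf.2) hr)

variable {n : ℕ} {p q : ℝ}

theorem lpDist_le_lpDist (hq : 0 < q) (hqp : q ≤ p) (x y : Fin n → ℝ) :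
    lpDist p x y ≤ lpDist q x y := by
  have hp : 0 < p := hq.trans_le hqp
  calc (∑ i, |x i - y i| ^ p) ^ (1 / p)
      = (∑ i, (|x i - y i| ^ q) ^ (p / q)) ^ (1 / p) := by
        simp only [← rpow_mul (abs_nonneg _), mul_div_cancel₀ p hq.ne']
    _ ≤ ((∑ i, |x i - y i| ^ q) ^ (p / q)) ^ (1 / p) := by
        gcongr
        exact sum_rpow_le_rpow_sum _ (fun i _ => by positivity) ((one_le_div hq).2 hqp)
    _ = (∑ i, |x i - y i| ^ q) ^ (1 / q) := by
        rw [← rpow_mul (by positivity), div_mul_div_cancel₀' hp.ne']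

theorem lpDist_le_card_rpow_mul_lpDist (hp : 0 < p) (hpq : p ≤ q) (x y : Fin n → ℝ) :
    lpDist p x y ≤ (n : ℝ) ^ (1 / p - 1 / q) * lpDist q x y := by
  have hq : 0 < q := hp.trans_le hpq
  calc (∑ i, |x i - y i| ^ p) ^ (1 / p)
      = ((∑ i, |x i - y i| ^ p) ^ (q / p)) ^ (1 / q) := by
        rw [← rpow_mul (by positivity), div_mul_div_cancel₀' hq.ne']
    _ ≤ ((n : ℝ) ^ (q / p - 1) * ∑ i, (|x i - y i| ^ p) ^ (q / p)) ^ (1 / q) := by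
        gcongr
        simpa using rpow_sum_le_const_mul_sum_rpow_of_nonneg Finset.univ ((one_le_div hp).2 hpq)
          fun i _ => rpow_nonneg (abs_nonneg (x i - y i)) p
    _ = (n : ℝ) ^ (1 / p - 1 / q) * (∑ i, |x i - y i| ^ q) ^ (1 / q) := by
        rw [mul_rpow (by positivity) (by positivity), ← rpow_mul n.cast_nonneg, sub_mul,
          div_mul_div_cancel₀' hq.ne', one_mul]
        simp only [← rpow_mul (abs_nonneg _), mul_div_cancel₀ q hp.ne']

theorem lpDist_le_card_rpow_min_mul_lpDist (hp : 0 < p) (hq : 0 < q) (x y : Fin n → ℝ) :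
    lpDist p x y ≤ (n : ℝ) ^ (1 / min p q - 1 / q) * lpDist q x y := by
  rcases le_total p q with hpq | hqp
  · rw [min_eq_left hpq]
    exact lpDist_le_card_rpow_mul_lpDist hp hpq x y
  · rw [min_eq_right hqp, sub_self, rpow_zero, one_mul]
    exact lpDist_le_lpDist hq hqp x y

theorem lpDist_two (x y : Fin n → ℝ) :
    lpDist 2 x y = dist (WithLp.toLp 2 x) (WithLp.toLp 2 y) := by
  simp [lpDist, EuclideanSpace.dist_eq, dist_eq, sqrt_eq_rpow]

end LpDist

section CubeTransport

theorem map_stdNormalCDF_gaussianReal :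
    (gaussianReal 0 1).map Φ = volume.restrict (Set.Icc 0 1) := by
  have h := map_withDensity_abs_det_fderiv_eq_addHaar volume
    (MeasurableSet.univ (α := ℝ)).nullMeasurableSet
    (fun x _ => (hasDerivAt_stdNormalCDF x).hasFDerivAt.hasFDerivWithinAt)
    strictMono_stdNormalCDF.injective.injOn
  rw [Set.image_univ, range_stdNormalCDF, Measure.restrict_univ,
    Measure.restrict_congr_set Ioo_ae_eq_Icc] at h
  rw [← h, gaussianReal_of_var_ne_zero 0 one_ne_zero]
  congr with x
  simp [gaussianPDF, abs_of_nonneg (gaussianPDFReal_nonneg 0 1 x)]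

/-- The coordinatewise normal CDF; it transports the standard Gaussian measure to the uniform
measure on the unit cube. -/
noncomputable def gaussianToCube {ι : Type*} (x : EuclideanSpace ℝ ι) : ι → ℝ :=
  fun i => Φ (x i)

theorem gaussianToCube_mem_Icc {ι : Type*} (x : EuclideanSpace ℝ ι) :
    gaussianToCube x ∈ Set.Icc 0 1 :=
  ⟨fun _ => (stdNormalCDF_pos _).le, fun _ => (stdNormalCDF_lt_one _).le⟩

theorem measurable_gaussianToCube {ι : Type*} :
    Measurable (gaussianToCube (ι := ι)) :=
  measurable_pi_lambda _ fun _ => continuous_stdNormalCDF.measurable.comp (by fun_prop)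

theorem map_gaussianToCube_stdGaussian {ι : Type*} [Fintype ι] :
    (stdGaussian (EuclideanSpace ℝ ι)).map gaussianToCube =
      volume.restrict (Set.Icc (0 : ι → ℝ) 1) := by
  have : IsProbabilityMeasure ((gaussianReal 0 1).map Φ) :=
    Measure.isProbabilityMeasure_map continuous_stdNormalCDF.aemeasurable
  calc (stdGaussian (EuclideanSpace ℝ ι)).map gaussianToCube
      = (Measure.pi fun _ : ι => gaussianReal 0 1).map fun x i => Φ (x i) := by
        rw [← map_pi_eq_stdGaussian, Measure.map_map measurable_gaussianToCube (by fun_prop)]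
        rfl
    _ = Measure.pi fun _ : ι => volume.restrict (Set.Icc 0 1) := by
        rw [Measure.pi_map_pi (f := fun _ => Φ) fun _ => continuous_stdNormalCDF.aemeasurable,
          map_stdNormalCDF_gaussianReal]
    _ = volume.restrict (Set.Icc 0 1) := by
        rw [← Measure.restrict_pi_pi, ← volume_pi, Set.pi_univ_Icc]
        rfl

theorem lpDist_two_gaussianToCube_le {n : ℕ} (x y : EuclideanSpace ℝ (Fin n)) :
    lpDist 2 (gaussianToCube x) (gaussianToCube y) ≤ (√(2 * π))⁻¹ * dist x y := by
  rw [lpDist_two, EuclideanSpace.dist_eq, EuclideanSpace.dist_eq,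
    ← sqrt_sq (by positivity : (0 : ℝ) ≤ (√(2 * π))⁻¹), ← sqrt_mul (sq_nonneg _), Finset.mul_sum]
  refine sqrt_le_sqrt (Finset.sum_le_sum fun i _ => ?_)
  rw [← mul_pow]
  gcongr
  simpa [gaussianToCube] using lipschitzWith_stdNormalCDF.dist_le_mul (x i) (y i)

theorem lpDist_gaussianToCube_le {n : ℕ} {p ε : ℝ} (hp : 0 < p) (hε : 0 ≤ ε)
    {x y : EuclideanSpace ℝ (Fin n)}
    (hxy : dist x y ≤ √(2 * π * n) * ε / (n : ℝ) ^ (1 / min p 2)) :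
    lpDist p (gaussianToCube x) (gaussianToCube y) ≤ ε :=
  calc lpDist p (gaussianToCube x) (gaussianToCube y)
      ≤ (n : ℝ) ^ (1 / min p 2 - 1 / 2) * lpDist 2 (gaussianToCube x) (gaussianToCube y) :=
        lpDist_le_card_rpow_min_mul_lpDist hp two_pos _ _
    _ ≤ (n : ℝ) ^ (1 / min p 2 - 1 / 2) * ((√(2 * π))⁻¹ * dist x y) := by
        gcongr
        exact lpDist_two_gaussianToCube_le x y
    _ ≤ (n : ℝ) ^ (1 / min p 2 - 1 / 2) *
          ((√(2 * π))⁻¹ * (√(2 * π * n) * ε / (n : ℝ) ^ (1 / min p 2))) := by gcongr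
    _ ≤ ε := by
        rcases n.eq_zero_or_pos with rfl | hn
        · simpa using hε
        · refine le_of_eq ?_
          have hn : (0 : ℝ) < n := Nat.cast_pos.2 hn
          rw [sqrt_mul (by positivity : 0 ≤ 2 * π), rpow_sub hn, ← sqrt_eq_rpow]
          field_simp

end CubeTransport

end

theorem cube_isoperimetric (n : ℕ) (A : Set (Fin n → ℝ))
    (hA : MeasurableSet A) (hAcube : A ⊆ Set.Icc 0 1)
    (p : ℝ) (hp : 0 < p) (ε : ℝ) (hε : 0 ≤ ε) (α : ℝ)
    (hα : stdNormalCDF α = (volume A).toReal) :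
    volume {x ∈ Set.Icc (0 : Fin n → ℝ) 1 | ∃ y ∈ A, lpDist p x y ≤ ε} ≥
      ENNReal.ofReal
        (stdNormalCDF (α + Real.sqrt (2 * Real.pi * n) * ε / (n : ℝ) ^ (1 / min p 2))) := by
  set r := √(2 * π * n) * ε / (n : ℝ) ^ (1 / min p 2)
  set S := {x ∈ Set.Icc (0 : Fin n → ℝ) 1 | ∃ y ∈ A, lpDist p x y ≤ ε}
  let γ := stdGaussian (EuclideanSpace ℝ (Fin n))
  have hγA : γ (gaussianToCube ⁻¹' A) = volume A := by
    rw [← Measure.map_apply measurable_gaussianToCube hA, map_gaussianToCube_stdGaussian,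
      Measure.restrict_eq_self _ hAcube]
  have hsub : {x | ∃ y ∈ gaussianToCube ⁻¹' A, dist x y ≤ r} ⊆ gaussianToCube ⁻¹' S :=
    fun x ⟨y, hy, hxy⟩ => ⟨gaussianToCube_mem_Icc x, gaussianToCube y, hy,
      lpDist_gaussianToCube_le hp hε hxy⟩
  calc ENNReal.ofReal (stdNormalCDF (α + r))
      ≤ γ {x | ∃ y ∈ gaussianToCube ⁻¹' A, dist x y ≤ r} :=
        ENNReal.ofReal_le_of_le_toReal <| stdNormalCDF_add_le_measureReal_dist_le
          (measurable_gaussianToCube hA) (hα.trans (by rw [← hγA]; rfl)).le (by positivity)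
    _ ≤ γ (gaussianToCube ⁻¹' S) := measure_mono hsub
    _ ≤ γ.map gaussianToCube S := Measure.le_map_apply measurable_gaussianToCube.aemeasurable S
    _ ≤ volume S := by
        rw [map_gaussianToCube_stdGaussian]
        exact Measure.restrict_apply_le _ _
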